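/- Bi-infinite rewriting strictly extends infinitary rewriting: in the signature with a constant a and a unary symbol C, let →ε = { (C(a), a) }, and let C^ω denote the unique term satisfying C^ω = C(C^ω) (which exists by corecursion). Then C^ω ∞→∞ a, but it is NOT the case that C^ω →→→ a; hence →→→ ⊊ ∞→∞. -/

import Mathlib

open Relation

/-- The polynomial functor of a signature. -/
def Sig {F : Type} (ar : F → ℕ) (X : Type) : PFunctor.{0} :=
  ⟨X ⊕ F, fun a => match a with
    | Sum.inl _ => Empty
    | Sum.inr f => Fin (ar f)⟩

/-- Possibly infinite terms: the final coalgebra (M-type) of the signature functor. -/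
abbrev Tm {F : Type} (ar : F → ℕ) (X : Type) : Type := (Sig ar X).M

/-- The lifting `↓R` of a relation on terms. -/
def lift {F : Type} (ar : F → ℕ) (X : Type) (R : Tm ar X → Tm ar X → Prop) :
    Tm ar X → Tm ar X → Prop := fun s t =>
  s = t ∨ ∃ (f : F) (sa ta : Fin (ar f) → Tm ar X),
    s = PFunctor.M.mk ⟨Sum.inr f, sa⟩ ∧ t = PFunctor.M.mk ⟨Sum.inr f, ta⟩ ∧
    ∀ i, R (sa i) (ta i)

/-- Knaster–Tarski least fixed point. -/
def mu {L : Type*} [CompleteLattice L] (f : L → L) : L := sInf {x | f x ≤ x}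

/-- Knaster–Tarski greatest fixed point. -/
def nu {L : Type*} [CompleteLattice L] (f : L → L) : L := sSup {x | x ≤ f x}

/-- The infinitary rewrite relation `→→→ := μx.νy.((→ε ∪ ↓x)* ∘ ↓y)`. -/
def ired {F X : Type} (ar : F → ℕ) (root : Tm ar X → Tm ar X → Prop) :
    Tm ar X → Tm ar X → Prop :=
  mu (fun x => nu (fun y => Relation.Comp (ReflTransGen (root ⊔ lift ar X x)) (lift ar X y)))

/-- The bi-infinite rewrite relation `∞→∞ := νy.((→ε ∪ ↓y)*)`. -/
def biInf {F X : Type} (ar : F → ℕ) (root : Tm ar X → Tm ar X → Prop) :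
    Tm ar X → Tm ar X → Prop :=
  nu (fun y => ReflTransGen (root ⊔ lift ar X y))

/-- The signature with a constant `a` and a unary symbol `C`. -/
inductive F2 : Type
  | a | C

/-- Arities: `a` is a constant, `C` is unary. -/
def ar2 : F2 → ℕ
  | F2.a => 0
  | F2.C => 1

variable {X : Type}

/-- The constant `a` as a term. -/
def ta (X : Type) : Tm ar2 X := PFunctor.M.mk ⟨Sum.inr F2.a, Fin.elim0⟩

/-- Application of the unary symbol `C`. -/
def CApp (t : Tm ar2 X) : Tm ar2 X := PFunctor.M.mk ⟨Sum.inr F2.C, fun _ => t⟩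

/-- The root-step relation `→ε = { (C(a), a) }`. -/
def root2 (X : Type) : Tm ar2 X → Tm ar2 X → Prop := fun s t =>
  s = CApp (ta X) ∧ t = ta X

/-- The term `C^ω`, obtained by corecursion. -/
def Comega (X : Type) : Tm ar2 X :=
  PFunctor.M.corec (fun _ : Unit => ⟨Sum.inr F2.C, fun _ => ()⟩) ()

theorem CApp_inj {s t : Tm ar2 X} (h : CApp s = CApp t) : s = t := by
  have h1 := PFunctor.M.mk_inj h
  have h2 := eq_of_heq (Sigma.mk.inj h1).2
  exact congrFun h2 (0 : Fin 1)

theorem CApp_ne_ta (s : Tm ar2 X) : CApp s ≠ ta X := by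
  intro h
  have h1 := PFunctor.M.mk_inj h
  have h2 := (Sigma.mk.inj h1).1
  cases h2

theorem Comega_eq (X : Type) : Comega X = CApp (Comega X) := by
  exact PFunctor.M.corec_def (F := Sig ar2 X) (fun _ : Unit => ⟨Sum.inr F2.C, fun _ => ()⟩) ()

theorem eq_Comega_of (P : Tm ar2 X → Prop) (hP : ∀ t, P t → ∃ t', t = CApp t' ∧ P t')
    (t : Tm ar2 X) (ht : P t) : t = Comega X := by
  refine PFunctor.M.bisim (fun s u => P s ∧ u = Comega X) ?_ _ _ ⟨ht, rfl⟩
  rintro s u ⟨hs, rfl⟩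
  obtain ⟨s', rfl, hs'⟩ := hP s hs
  refine ⟨Sum.inr F2.C, fun _ => s', fun _ => Comega X, ?_, ?_, fun _ => ⟨hs', rfl⟩⟩
  · exact PFunctor.M.dest_mk _
  · conv_lhs => rw [Comega_eq]
    exact PFunctor.M.dest_mk _

theorem lift_Comega {R : Tm ar2 X → Tm ar2 X → Prop} {t : Tm ar2 X}
    (h : lift ar2 X R (Comega X) t) : t = Comega X ∨ ∃ t', t = CApp t' ∧ R (Comega X) t' := by
  rcases h with h | ⟨f, sa, tb, h1, h2, h3⟩
  · exact Or.inl h.symm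
  · right
    cases f with
    | a =>
      exfalso
      rw [Comega_eq] at h1
      have h4 := (Sigma.mk.inj (PFunctor.M.mk_inj h1)).1
      cases h4
    | C =>
      have e : ∀ g : Fin 1 → Tm ar2 X, g = fun _ => g 0 := by
        intro g; funext i; rw [Subsingleton.elim i 0]
      have hs : Comega X = CApp (sa (0 : Fin 1)) := by
        rw [h1]; unfold CApp; congr 2; exact e sa
      have ht : t = CApp (tb (0 : Fin 1)) := by
        rw [h2]; unfold CApp; congr 2; exact e tb
      refine ⟨_, ht, ?_⟩
      have h5 := h3 (0 : Fin 1)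
      have h6 : Comega X = sa (0 : Fin 1) := CApp_inj ((Comega_eq X).symm.trans hs)
      rw [h6]; exact h5

theorem lift_mono {F : Type} {ar : F → ℕ} {R S : Tm ar X → Tm ar X → Prop}
    (h : R ≤ S) : lift ar X R ≤ lift ar X S := by
  rintro s t (h1 | ⟨f, sa, tb, h1, h2, h3⟩)
  · exact Or.inl h1
  · exact Or.inr ⟨f, sa, tb, h1, h2, fun i => h _ _ (h3 i)⟩

theorem step_mono {F : Type} {ar : F → ℕ} {r R S : Tm ar X → Tm ar X → Prop}
    (h : R ≤ S) {s t} (hst : ReflTransGen (r ⊔ lift ar X R) s t) :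
    ReflTransGen (r ⊔ lift ar X S) s t :=
  ReflTransGen.mono (sup_le_sup_left (lift_mono h) r) _ _ hst

theorem le_nu {L : Type*} [CompleteLattice L] {f : L → L} {x : L} (h : x ≤ f x) : x ≤ nu f :=
  le_sSup h

theorem nu_le {L : Type*} [CompleteLattice L] {f : L → L} {x : L}
    (h : ∀ y, y ≤ f y → y ≤ x) : nu f ≤ x := sSup_le h

theorem mu_le {L : Type*} [CompleteLattice L] {f : L → L} {x : L} (h : f x ≤ x) : mu f ≤ x :=
  sInf_le h

theorem biInf_post {F : Type} (ar : F → ℕ) (r : Tm ar X → Tm ar X → Prop) {s t}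
    (h : biInf ar r s t) : ReflTransGen (r ⊔ lift ar X (biInf ar r)) s t := by
  have : biInf ar r ≤ fun s t => ReflTransGen (r ⊔ lift ar X (biInf ar r)) s t := by
    refine nu_le fun y hy s t hst => step_mono (le_nu hy) (hy s t hst)
  exact this s t h

theorem ired_le_biInf {F : Type} (ar : F → ℕ) (r : Tm ar X → Tm ar X → Prop) :
    ired ar r ≤ biInf ar r := by
  refine mu_le ?_
  refine nu_le fun y hy => ?_
  refine le_trans le_sup_left (le_nu (x := y ⊔ biInf ar r) ?_)
  rintro s t (h | h)
  · obtain ⟨u, h1, h2⟩ := hy s t h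
    exact (step_mono le_sup_right h1).tail (Or.inr (lift_mono le_sup_left _ _ h2))
  · exact step_mono le_sup_right (biInf_post ar r h)

theorem ired_Comega {t : Tm ar2 X} (h : ired ar2 (root2 X) (Comega X) t) : t = Comega X := by
  have key : ired ar2 (root2 X) ≤ fun s t => s = Comega X → t = Comega X := by
    refine mu_le ?_
    refine nu_le fun y hy => ?_
    rintro s t hst rfl
    refine eq_Comega_of (fun t => t = Comega X ∨ y (Comega X) t) ?_ t (Or.inr hst)
    rintro t (rfl | ht)
    · exact ⟨_, Comega_eq X, Or.inl rfl⟩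
    obtain ⟨u, h1, h2⟩ := hy _ _ ht
    have hu : u = Comega X := by
      clear h2
      induction h1 with
      | refl => rfl
      | tail _ hbc ih =>
        subst ih
        rcases hbc with ⟨h, _⟩ | h
        · rw [Comega_eq] at h
          have h' := CApp_inj h
          rw [Comega_eq] at h'
          exact (CApp_ne_ta _ h').elim
        · rcases lift_Comega h with h | ⟨t', rfl, h8⟩
          · exact h
          · rw [h8 rfl]; exact (Comega_eq X).symm
    subst hu
    rcases lift_Comega h2 with rfl | ⟨t', rfl, h⟩
    · exact ⟨_, Comega_eq X, Or.inl rfl⟩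
    · exact ⟨_, rfl, Or.inr h⟩
  exact key _ _ h rfl

theorem biInf_Comega (X : Type) : biInf ar2 (root2 X) (Comega X) (ta X) := by
  have : (fun s t => s = Comega X ∧ t = ta X) ≤ biInf ar2 (root2 X) := by
    refine le_nu ?_
    rintro s t ⟨rfl, rfl⟩
    refine (ReflTransGen.single (b := CApp (ta X)) (Or.inr (Or.inr ?_))).tail (Or.inl ⟨rfl, rfl⟩)
    exact ⟨F2.C, fun _ => Comega X, fun _ => ta X, Comega_eq X, rfl, fun _ => ⟨rfl, rfl⟩⟩
  exact this _ _ ⟨rfl, rfl⟩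

/-- `C^ω` satisfies its defining equation and is the unique such term;
`C^ω ∞→∞ a`, but not `C^ω →→→ a`; hence `→→→` is strictly contained in `∞→∞`. -/
theorem ired_strictly_below_biInf (X : Type) :
    (Comega X = CApp (Comega X) ∧ ∀ u : Tm ar2 X, u = CApp u → u = Comega X) ∧
    biInf ar2 (root2 X) (Comega X) (ta X) ∧
    ¬ ired ar2 (root2 X) (Comega X) (ta X) ∧
    ired ar2 (root2 X) < biInf ar2 (root2 X) := by
  have hn : ¬ ired ar2 (root2 X) (Comega X) (ta X) := by
    intro h
    have h1 := ired_Comega h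
    rw [Comega_eq] at h1
    exact CApp_ne_ta _ h1.symm
  refine ⟨⟨Comega_eq X, fun u hu => ?_⟩, biInf_Comega X, hn, ?_⟩
  · exact eq_Comega_of (fun t => t = u) (fun t ht => ⟨u, ht.trans hu, rfl⟩) u rfl
  · exact lt_of_le_not_ge (ired_le_biInf _ _) fun h => hn (h _ _ (biInf_Comega X))
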